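/- Let f : [0,∞) → ℝ satisfy |f(x) − f(y)| ≤ L|x − y|^α/(1 + x + y)^α for all x, y ∈ [0,∞), with L > 0 and α ∈ (0,1] (the general Hölder-type condition with γ = 1 and β = α). Then for all n ≥ 1 and uniformly for all x ∈ (0,∞), the Baskakov operator satisfies |f(x) − S_n(f;x)| ≤ L/n^{α/2}. -/

import Mathlib

/-- The weight of the Baskakov operator, in the form adapted to `n = m + 1`. -/
noncomputable def baskakovWeight (m : ℕ) (x : ℝ) (k : ℕ) : ℝ :=
  ((k + m).choose m : ℝ) * x ^ k / (1 + x) ^ (m + 1 + k)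

lemma baskakovWeight_nonneg (m : ℕ) {x : ℝ} (hx : 0 < x) (k : ℕ) : 0 ≤ baskakovWeight m x k := by
  unfold baskakovWeight
  positivity

lemma hasSum_baskakovWeight (m : ℕ) {x : ℝ} (hx : 0 < x) : HasSum (baskakovWeight m x) 1 := by
  have hr : ‖x / (1 + x)‖ < 1 := by
    rw [Real.norm_of_nonneg (by positivity), div_lt_one (by positivity)]
    linarith
  have h := (hasSum_choose_mul_geometric_of_norm_lt_one m hr).mul_right (((1 + x) ^ (m + 1))⁻¹)
  have h1 : 1 - x / (1 + x) = (1 + x)⁻¹ := by field_simp; ring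
  have hp : (1 + x) ≠ 0 := by positivity
  convert h using 1
  · rfl
  · funext k
    rw [baskakovWeight, div_pow, pow_add]
    field_simp
  · rw [h1, inv_pow]
    field_simp

lemma succ_mul_baskakovWeight_succ (m : ℕ) {x : ℝ} (hx : 0 < x) (k : ℕ) :
    ((k + 1 : ℕ) : ℝ) * baskakovWeight m x (k + 1) = (m + 1) * x * baskakovWeight (m + 1) x k := by
  have hc : ((k + 1 + m).choose m : ℝ) * (k + 1) = (k + (m + 1)).choose (m + 1) * (m + 1) := by
    have h := Nat.choose_succ_right_eq (k + 1 + m) m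
    rw [show k + 1 + m - m = k + 1 by omega] at h
    rw [show k + (m + 1) = k + 1 + m by omega]
    exact_mod_cast h.symm
  have hp : (1 + x) ≠ 0 := by positivity
  unfold baskakovWeight
  rw [show m + 1 + (k + 1) = m + 1 + 1 + k by omega, pow_succ x k, ← mul_div_assoc, ← mul_div_assoc]
  congr 1
  push_cast
  linear_combination x ^ k * x * hc

lemma hasSum_mul_baskakovWeight (m : ℕ) {x : ℝ} (hx : 0 < x) :
    HasSum (fun k : ℕ => (k : ℝ) * baskakovWeight m x k) ((m + 1) * x) := by
  rw [← hasSum_nat_add_iff' 1]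
  simp only [succ_mul_baskakovWeight_succ m hx]
  simpa using (hasSum_baskakovWeight (m + 1) hx).mul_left ((m + 1) * x)

lemma hasSum_sq_mul_baskakovWeight (m : ℕ) {x : ℝ} (hx : 0 < x) :
    HasSum (fun k : ℕ => (k : ℝ) ^ 2 * baskakovWeight m x k)
      ((m + 1) * x * ((m + 2) * x + 1)) := by
  rw [← hasSum_nat_add_iff' 1]
  have h := ((hasSum_mul_baskakovWeight (m + 1) hx).add
    (hasSum_baskakovWeight (m + 1) hx)).mul_left ((m + 1) * x)
  convert h using 1
  · rfl
  · funext k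
    have := succ_mul_baskakovWeight_succ m hx k
    rw [sq, mul_assoc, this]
    push_cast
    ring
  · rw [Finset.sum_range_one]
    push_cast
    ring

lemma hasSum_sq_sub_mul_baskakovWeight (m : ℕ) {x : ℝ} (hx : 0 < x) :
    HasSum (fun k : ℕ => (x - k / ((m + 1 : ℕ) : ℝ)) ^ 2 * baskakovWeight m x k)
      (x * (1 + x) / ((m + 1 : ℕ) : ℝ)) := by
  have hm : (m + 1 : ℝ) ≠ 0 := by positivity
  have h := (((hasSum_baskakovWeight m hx).mul_left (x ^ 2)).sub
    ((hasSum_mul_baskakovWeight m hx).mul_left (2 * x / (m + 1)))).add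
    ((hasSum_sq_mul_baskakovWeight m hx).mul_left (1 / (m + 1 : ℝ) ^ 2))
  convert h using 1
  · rfl
  · funext k
    push_cast
    field_simp
    ring
  · push_cast
    field_simp
    ring

/-- Tangent-line bound for the concave power `t ↦ t ^ (α / 2)` at `t = 1`, rescaled by `N`. -/
lemma rpow_le_tangent {α N t : ℝ} (hα : 0 < α) (hα1 : α ≤ 1) (hN : 0 < N) (ht : 0 ≤ t) :
    t ^ α ≤ (1 + α / 2 * (N * t ^ 2 - 1)) / N ^ (α / 2) := by
  have hb := rpow_one_add_le_one_add_mul_self (s := N * t ^ 2 - 1) (p := α / 2)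
    (by nlinarith [mul_nonneg hN.le (sq_nonneg t)]) (by linarith) (by linarith)
  have he : (N * t ^ 2) ^ (α / 2) = N ^ (α / 2) * t ^ α := by
    rw [Real.mul_rpow hN.le (sq_nonneg t), ← Real.rpow_natCast, ← Real.rpow_mul ht]
    congr 2
    push_cast
    ring
  rw [add_sub_cancel, he] at hb
  rw [le_div_iff₀ (Real.rpow_pos_of_pos hN _)]
  linarith

/-- Uniform error bound for the Baskakov operator for a function satisfying the general
Hölder-type condition with `γ = 1` and `β = α`: `|f(x) - S_n(f;x)| ≤ L / n^(α/2)`. -/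
theorem baskakov_uniform_bound
    (f : ℝ → ℝ) (L α : ℝ) (hL : 0 < L) (hα : 0 < α) (hα1 : α ≤ 1)
    (hf : ∀ y z : ℝ, 0 ≤ y → 0 ≤ z →
      |f y - f z| ≤ L * |y - z| ^ α / (1 + y + z) ^ α)
    (n : ℕ) (hn : 1 ≤ n) (x : ℝ) (hx : 0 < x) :
    |f x - ∑' (k : ℕ), f ((k : ℝ) / n) *
        (((n + k - 1).choose k : ℝ) * x ^ k / (1 + x) ^ (n + k))|
      ≤ L / (n : ℝ) ^ (α / 2) := by
  obtain ⟨m, rfl⟩ : ∃ m, n = m + 1 := ⟨n - 1, by omega⟩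
  have hw : ∀ k : ℕ, ((m + 1 + k - 1).choose k : ℝ) * x ^ k / (1 + x) ^ (m + 1 + k)
      = baskakovWeight m x k := by
    intro k
    rw [baskakovWeight, show m + 1 + k - 1 = k + m by omega, Nat.choose_symm_add]
  simp only [hw]
  set N : ℝ := ((m + 1 : ℕ) : ℝ) with hN
  have hN0 : 0 < N := by positivity
  have hx1 : 0 < 1 + x := by positivity
  have hbound : ∀ k : ℕ, ‖(f x - f (k / N)) * baskakovWeight m x k‖ ≤
      L / N ^ (α / 2) * ((1 - α / 2) * baskakovWeight m x k +
        α / 2 * N / (1 + x) ^ 2 * ((x - k / N) ^ 2 * baskakovWeight m x k)) := by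
    intro k
    have hk : 0 ≤ (k : ℝ) / N := by positivity
    have hp := baskakovWeight_nonneg m hx k
    have ht := rpow_le_tangent (t := |x - k / N| / (1 + x)) hα hα1 hN0 (by positivity)
    have h : |f x - f (k / N)| ≤ L * (|x - k / N| / (1 + x)) ^ α := by
      refine (hf x (k / N) hx.le hk).trans ?_
      rw [Real.div_rpow (abs_nonneg _) hx1.le, ← mul_div_assoc]
      have hle : 1 + x ≤ 1 + x + k / N := by linarith
      gcongr
    rw [norm_mul, Real.norm_eq_abs, Real.norm_of_nonneg hp]
    refine (mul_le_mul_of_nonneg_right (h.trans (mul_le_mul_of_nonneg_left ht hL.le)) hp).trans_eq ?_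
    rw [div_pow, sq_abs]
    ring
  have hg := (((hasSum_baskakovWeight m hx).mul_left (1 - α / 2)).add
    ((hasSum_sq_sub_mul_baskakovWeight m hx).mul_left (α / 2 * N / (1 + x) ^ 2))).mul_left
      (L / N ^ (α / 2))
  have hdiff : Summable fun k : ℕ => (f x - f (k / N)) * baskakovWeight m x k :=
    Summable.of_norm_bounded hg.summable hbound
  have hsum := ((hasSum_baskakovWeight m hx).mul_left (f x)).sub hdiff.hasSum
  have heq : ∑' k : ℕ, f (k / N) * baskakovWeight m x k
      = f x - ∑' k : ℕ, (f x - f (k / N)) * baskakovWeight m x k := by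
    rw [mul_one] at hsum
    rw [← hsum.tsum_eq]
    congr 1
    funext k
    ring
  rw [heq, sub_sub_cancel]
  refine (tsum_of_norm_bounded hg hbound).trans ?_
  refine mul_le_of_le_one_right (by positivity) ?_
  have hq : α / 2 * N / (1 + x) ^ 2 * (x * (1 + x) / N) = α / 2 * (x / (1 + x)) := by
    field_simp
  have hx2 : x / (1 + x) ≤ 1 := by
    rw [div_le_one hx1]
    linarith
  rw [← hN, hq]
  nlinarith
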